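/- For every non-negative integer k, every non-negative integer n, and every j ∈ {2, 4, 5, 6}, the number of (49k+3)-colour partitions of 49n+7j+1 is divisible by 7; that is, p_{49k+3}(49n+7j+1) ≡ 0 (mod 7). -/

import Mathlib

/-- `colouredPartitions r n` is the number of `r`-colour partitions of `n`:
multisets of pairs `(m, c)` with `m` a positive integer part and `c` one of `r`
colours, whose parts (first components, with multiplicity) sum to `n`.  Such a
multiset is encoded by its multiplicity function `f : ℕ+ × Fin r →₀ ℕ`. -/
noncomputable def colouredPartitions (r n : ℕ) : ℕ :=
  Nat.card {f : ℕ+ × Fin r →₀ ℕ // (f.sum fun x m => (x.1 : ℕ) * m) = n}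

/-!
Write `F = ∏ (1 - Xⁱ)` and let `P` be the generating function of the `(49k + 3)`-colour partitions
modulo `7`, so that `P * F ^ (49k + 3) = 1` and hence `P * (F ^ (7k + 1)) ^ 7 = F ^ 4`. Since
`g ^ 7 = g(X ^ 7)` modulo `7`, extracting the exponents congruent to `1` modulo `7` acts on `P` and
`F ^ 4` alone.

Multiplying Euler's pentagonal series for `F` by Jacobi's series for `F ^ 3` writes the coefficients
of `F ^ 4` as sums over the integer points of `x² + 3y² = 24n + 4`. Multiplication by the elements
`-2 ± √-3` of norm `7` relates the points at levels `n` and `7n + 1`, and gives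
`[X ^ (7n + 1)] F ^ 4 = 3 [X ^ n] F ^ 4` modulo `7`. The extracted series `P₁` therefore satisfies
`P₁ * (F ^ k) ^ 7 = 3 F ^ 3`. By Jacobi again, the exponents `n` of `F ^ 3` have `8n + 1` a square
`(2m + 1)²`, with coefficient `± (2m + 1)`; for `n` congruent to `2`, `4`, `5` or `6` modulo `7`
this forces the coefficient to vanish modulo `7`.

Jacobi's series itself comes from the `q`-binomial theorem, by differentiating
`∏ (qⁿ - z qⁱ)`, `0 ≤ i ≤ 2n`, at its root `z = 1` and letting `n` tend to infinity.
-/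

open Finset PowerSeries

section GaussianBinomial

variable {R S : Type*} [CommRing R] [CommRing S]

/-- The `q`-Pochhammer symbol `(q; q)_n = (1 - q)(1 - q²)⋯(1 - qⁿ)`. -/
def qPochhammer (q : R) (n : ℕ) : R :=
  ∏ i ∈ range n, (1 - q ^ (i + 1))

/-- The Gaussian binomial coefficient `[n, k]_q`, defined by the `q`-Pascal recursion so that it
makes sense for every element `q` of a commutative ring. -/
def gaussBinom (q : R) : ℕ → ℕ → R
  | _, 0 => 1
  | 0, _ + 1 => 0
  | n + 1, k + 1 => gaussBinom q n k + q ^ (k + 1) * gaussBinom q n (k + 1)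

theorem qPochhammer_succ (q : R) (n : ℕ) :
    qPochhammer q (n + 1) = qPochhammer q n * (1 - q ^ (n + 1)) :=
  prod_range_succ _ n

theorem gaussBinom_zero_right (q : R) (n : ℕ) : gaussBinom q n 0 = 1 := by
  cases n <;> rfl

theorem gaussBinom_succ_succ (q : R) (n k : ℕ) :
    gaussBinom q (n + 1) (k + 1) = gaussBinom q n k + q ^ (k + 1) * gaussBinom q n (k + 1) :=
  rfl

theorem gaussBinom_eq_zero_of_lt (q : R) {n k : ℕ} (h : n < k) : gaussBinom q n k = 0 := by
  induction n generalizing k with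
  | zero =>
    obtain ⟨k, rfl⟩ := Nat.exists_eq_add_one.2 h
    rfl
  | succ n ih =>
    obtain ⟨k, rfl⟩ := Nat.exists_eq_add_one.2 (n.succ_pos.trans h)
    rw [gaussBinom_succ_succ, ih (by lia), ih (by lia), mul_zero, add_zero]

theorem gaussBinom_self (q : R) (n : ℕ) : gaussBinom q n n = 1 := by
  induction n with
  | zero => rfl
  | succ n ih =>
    rw [gaussBinom_succ_succ, ih, gaussBinom_eq_zero_of_lt q n.lt_succ_self, mul_zero, add_zero]

theorem map_gaussBinom (f : R →+* S) (q : R) (n k : ℕ) :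
    f (gaussBinom q n k) = gaussBinom (f q) n k := by
  induction n generalizing k with
  | zero => cases k <;> simp [gaussBinom]
  | succ n ih => cases k <;> simp [gaussBinom, ih]

theorem gaussBinom_mul_qPochhammer_mul_qPochhammer (q : R) (a b : ℕ) :
    gaussBinom q (a + b) a * (qPochhammer q a * qPochhammer q b) = qPochhammer q (a + b) := by
  induction a generalizing b with
  | zero => simp [gaussBinom_zero_right, qPochhammer]
  | succ a iha =>
    induction b with
    | zero => simp [gaussBinom_self, qPochhammer]
    | succ b ihb =>
      have ha := iha (b + 1)
      rw [show a + 1 + (b + 1) = a + b + 1 + 1 by ring, gaussBinom_succ_succ]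
      rw [show a + (b + 1) = a + b + 1 by ring] at ha
      rw [show a + 1 + b = a + b + 1 by ring] at ihb
      rw [qPochhammer_succ q (a + b + 1)]
      rw [qPochhammer_succ q a] at ihb ⊢
      rw [qPochhammer_succ q b] at ha ⊢
      linear_combination (1 - q ^ (a + 1)) * ha + q ^ (a + 1) * (1 - q ^ (b + 1)) * ihb

theorem choose_two_succ (n : ℕ) : (n + 1).choose 2 = n.choose 2 + n := by
  rw [Nat.choose_succ_succ' n 1, Nat.choose_one_right, add_comm]

theorem prod_sub_mul_pow_eq_sum_gaussBinom (q y z : R) (n : ℕ) :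
    ∏ i ∈ range n, (y - z * q ^ i) =
      ∑ k ∈ range (n + 1), (-1) ^ k * q ^ k.choose 2 * gaussBinom q n k * y ^ (n - k) * z ^ k := by
  induction n generalizing z with
  | zero => simp [gaussBinom]
  | succ n ih =>
    set t : ℕ → R := fun k ↦
      (-1) ^ k * q ^ k.choose 2 * gaussBinom q n k * y ^ (n - k) * (z * q) ^ k with ht
    have t_last : t (n + 1) = 0 := by simp [ht, gaussBinom_eq_zero_of_lt]
    have peel_first :
        ∏ i ∈ range (n + 1), (y - z * q ^ i) = (y - z) * ∑ k ∈ range (n + 1), t k := by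
      rw [prod_range_succ', ← ih (z * q), mul_comm]
      simp only [pow_succ', pow_zero, mul_one, mul_assoc]
    have pascal : ∀ k ∈ range (n + 1),
        (-1) ^ (k + 1) * q ^ (k + 1).choose 2 * gaussBinom q (n + 1) (k + 1) *
          y ^ (n + 1 - (k + 1)) * z ^ (k + 1) = y * t (k + 1) - z * t k := by
      intro k hk
      rcases (mem_range_succ_iff.1 hk).eq_or_lt with rfl | hkn
      · rw [t_last, gaussBinom_succ_succ, gaussBinom_eq_zero_of_lt q k.lt_succ_self,
          choose_two_succ]
        simp only [ht, Nat.sub_self]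
        ring
      · obtain ⟨d, rfl⟩ := Nat.exists_eq_add_of_lt hkn
        simp only [ht, gaussBinom_succ_succ, choose_two_succ,
          show k + d + 1 + 1 - (k + 1) = d + 1 by lia, show k + d + 1 - (k + 1) = d by lia,
          show k + d + 1 - k = d + 1 by lia]
        ring
    have t_zero : y * t 0 = y ^ (n + 1) := by simp [ht, gaussBinom_zero_right, pow_succ']
    rw [peel_first, sum_range_succ' _ (n + 1), sum_congr rfl pascal, sum_sub_distrib, ← mul_sum,
      ← mul_sum]
    have shift : ∑ k ∈ range (n + 1), t (k + 1) = ∑ k ∈ range (n + 1), t k - t 0 := by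
      rw [eq_sub_iff_add_eq, ← sum_range_succ', sum_range_succ, t_last, add_zero]
    simp only [shift, gaussBinom_zero_right, Nat.choose_zero_succ, pow_zero, Nat.sub_zero]
    linear_combination t_zero

theorem prod_pow_sub_pow (q : R) (n : ℕ) :
    ∏ i ∈ range n, (q ^ n - q ^ i) = (-1) ^ n * q ^ n.choose 2 * qPochhammer q n := by
  have factor : ∀ i ∈ range n, q ^ n - q ^ i = -1 * q ^ i * (1 - q ^ (n - 1 - i + 1)) := by
    intro i hi
    obtain ⟨d, rfl⟩ := Nat.exists_eq_add_of_lt (mem_range.1 hi)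
    rw [show i + d + 1 - 1 - i + 1 = d + 1 by lia]
    ring
  rw [prod_congr rfl factor, prod_mul_distrib, prod_mul_distrib, prod_const, card_range,
    prod_pow_eq_pow_sum, sum_range_id, Nat.choose_two_right,
    prod_range_reflect (fun i ↦ 1 - q ^ (i + 1)), qPochhammer]

theorem prod_pow_sub_pow_add (q : R) (n : ℕ) :
    ∏ i ∈ range n, (q ^ n - q ^ (n + 1 + i)) = q ^ (n * n) * qPochhammer q n := by
  have factor (i : ℕ) : q ^ n - q ^ (n + 1 + i) = q ^ n * (1 - q ^ (i + 1)) := by ring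
  simp only [factor, prod_mul_distrib, prod_const, card_range, ← pow_mul, qPochhammer]

/-- The factor `i = n` vanishes at `1`, so only the term differentiating it survives. -/
theorem eval_one_derivative_prod_sub (q : R) (n : ℕ) :
    (Polynomial.derivative (∏ i ∈ range (2 * n + 1),
        (Polynomial.C (q ^ n) - Polynomial.X * Polynomial.C q ^ i))).eval 1 =
      (-1) ^ (n + 1) * (q ^ ((n + 1).choose 2 + n * n) * qPochhammer q n ^ 2) := by
  have isolate_root : ∏ i ∈ range (2 * n + 1),
        (Polynomial.C (q ^ n) - Polynomial.X * Polynomial.C q ^ i) =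
      (∏ i ∈ range n, (Polynomial.C (q ^ n) - Polynomial.X * Polynomial.C q ^ i)) *
        (∏ i ∈ range n, (Polynomial.C (q ^ n) - Polynomial.X * Polynomial.C q ^ (n + 1 + i))) *
        (Polynomial.C (q ^ n) - Polynomial.X * Polynomial.C q ^ n) := by
    rw [show 2 * n + 1 = n + 1 + n by ring, prod_range_add, prod_range_succ]
    ring
  rw [isolate_root, Polynomial.derivative_mul]
  simp only [← Polynomial.C_pow, Polynomial.eval_add, Polynomial.eval_mul, Polynomial.eval_prod,
    Polynomial.eval_sub, Polynomial.eval_C, Polynomial.eval_X, Polynomial.derivative_sub,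
    Polynomial.derivative_C, Polynomial.derivative_mul, Polynomial.derivative_X,
    Polynomial.eval_neg, one_mul, mul_zero, add_zero, sub_self, zero_sub, zero_add,
    prod_pow_sub_pow, prod_pow_sub_pow_add, choose_two_succ]
  ring

theorem sum_natCast_mul_gaussBinom (q : R) (n : ℕ) :
    ∑ k ∈ range (2 * n + 2), (k : R) *
        ((-1) ^ k * q ^ (k.choose 2 + n * (2 * n + 1 - k)) * gaussBinom q (2 * n + 1) k) =
      (-1) ^ (n + 1) * (q ^ ((n + 1).choose 2 + n * n) * qPochhammer q n ^ 2) := by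
  rw [← eval_one_derivative_prod_sub, prod_sub_mul_pow_eq_sum_gaussBinom,
    Polynomial.derivative_sum, Polynomial.eval_finsetSum]
  refine sum_congr rfl fun k _ ↦ ?_
  have coeff_eq : (-1) ^ k * Polynomial.C q ^ k.choose 2 *
        gaussBinom (Polynomial.C q) (2 * n + 1) k * Polynomial.C (q ^ n) ^ (2 * n + 1 - k) =
      Polynomial.C
        ((-1) ^ k * q ^ (k.choose 2 + n * (2 * n + 1 - k)) * gaussBinom q (2 * n + 1) k) := by
    simp only [map_mul, map_pow, map_neg, map_one, map_gaussBinom]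
    ring
  rw [coeff_eq, Polynomial.derivative_C_mul_X_pow]
  simp [mul_comm]

theorem isUnit_qPochhammer_X (n : ℕ) : IsUnit (qPochhammer (X : R⟦X⟧) n) := by
  simp [PowerSeries.isUnit_iff_constantCoeff, qPochhammer]

theorem gaussBinom_X_symm {n a b : ℕ} (h : a + b = n) :
    gaussBinom (X : R⟦X⟧) n a = gaussBinom X n b := by
  subst h
  refine ((isUnit_qPochhammer_X a).mul (isUnit_qPochhammer_X b)).mul_right_cancel ?_
  rw [gaussBinom_mul_qPochhammer_mul_qPochhammer, mul_comm (qPochhammer X a), add_comm a b,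
    gaussBinom_mul_qPochhammer_mul_qPochhammer]

theorem two_mul_choose_two (n : ℕ) : 2 * (n.choose 2 : ℤ) = n * (n - 1) := by
  induction n with
  | zero => simp
  | succ n ih => rw [choose_two_succ]; push_cast; linarith

theorem sum_range_two_mul {M : Type*} [AddCommMonoid M] (f : ℕ → M) (n : ℕ) :
    ∑ k ∈ range (2 * n), f k = ∑ k ∈ range n, (f (n + k) + f (n - 1 - k)) := by
  rw [two_mul, sum_range_add, sum_add_distrib, sum_range_reflect, add_comm]

theorem choose_two_add_mul_upper (k d : ℕ) :
    (k + d + 1 + k).choose 2 + (k + d) * d =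
      (k + d + 1).choose 2 + (k + d) * (k + d) + (k + 1).choose 2 := by
  have := two_mul_choose_two (k + d + 1 + k)
  have := two_mul_choose_two (k + d + 1)
  have := two_mul_choose_two (k + 1)
  zify
  push_cast at *
  linarith

theorem choose_two_add_mul_lower (k d : ℕ) :
    d.choose 2 + (k + d) * (k + d + 1 + k) =
      (k + d + 1).choose 2 + (k + d) * (k + d) + (k + 1).choose 2 := by
  have := two_mul_choose_two d
  have := two_mul_choose_two (k + d + 1)
  have := two_mul_choose_two (k + 1)
  zify
  push_cast at *
  linarith

theorem gaussBinom_X_upper_term {n k : ℕ} (hk : k ≤ n) :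
    (-1) ^ (n + 1 + k) * X ^ ((n + 1 + k).choose 2 + n * (2 * n + 1 - (n + 1 + k))) *
        gaussBinom (X : R⟦X⟧) (2 * n + 1) (n + 1 + k) =
      (-1) ^ (n + 1) * (X ^ ((n + 1).choose 2 + n * n) *
        ((-1) ^ k * X ^ (k + 1).choose 2 * gaussBinom X (2 * n + 1) (n - k))) := by
  obtain ⟨d, rfl⟩ := Nat.exists_eq_add_of_le hk
  rw [show 2 * (k + d) + 1 - (k + d + 1 + k) = d by lia, choose_two_add_mul_upper,
    Nat.add_sub_cancel_left, gaussBinom_X_symm (show k + d + 1 + k + d = 2 * (k + d) + 1 by ring)]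
  ring

theorem gaussBinom_X_lower_term {n k : ℕ} (hk : k ≤ n) :
    (-1) ^ (n - k) * X ^ ((n - k).choose 2 + n * (2 * n + 1 - (n - k))) *
        gaussBinom (X : R⟦X⟧) (2 * n + 1) (n - k) =
      -((-1) ^ (n + 1) * (X ^ ((n + 1).choose 2 + n * n) *
        ((-1) ^ k * X ^ (k + 1).choose 2 * gaussBinom X (2 * n + 1) (n - k)))) := by
  obtain ⟨d, rfl⟩ := Nat.exists_eq_add_of_le hk
  have sign : (-1 : R⟦X⟧) ^ d = (-1) ^ (k + d) * (-1) ^ k := by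
    rw [pow_add, mul_right_comm, ← mul_pow, neg_one_mul, neg_neg, one_pow, one_mul]
  rw [Nat.add_sub_cancel_left, show 2 * (k + d) + 1 - d = k + d + 1 + k by lia,
    choose_two_add_mul_lower, sign]
  ring

/-- A finite form of Jacobi's identity: `n + 1 + k` and `n - k` give, up to sign, the same term of
`sum_natCast_mul_gaussBinom`, with the multipliers `n + 1 + k` and `n - k` differing by `2k + 1`. -/
theorem sum_gaussBinom_X_eq_qPochhammer_X_sq (n : ℕ) :
    ∑ k ∈ range (n + 1), (-1) ^ k * (2 * (k : R⟦X⟧) + 1) * X ^ (k + 1).choose 2 *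
      gaussBinom X (2 * n + 1) (n - k) = qPochhammer (X : R⟦X⟧) n ^ 2 := by
  have derivative_identity := sum_natCast_mul_gaussBinom (X : R⟦X⟧) n
  rw [show 2 * n + 2 = 2 * (n + 1) by ring, sum_range_two_mul] at derivative_identity
  refine X_pow_mul_cancel (k := (n + 1).choose 2 + n * n)
    (((isUnit_neg_one (α := R⟦X⟧)).pow (n + 1)).mul_left_cancel ?_)
  rw [← derivative_identity, mul_sum, mul_sum]
  refine sum_congr rfl fun k hk ↦ ?_
  have hkn := mem_range_succ_iff.1 hk
  rw [Nat.add_sub_cancel, gaussBinom_X_upper_term hkn, gaussBinom_X_lower_term hkn,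
    Nat.cast_sub hkn]
  push_cast
  ring

end GaussianBinomial

section EulerProduct

variable (R : Type*) [CommRing R]

theorem X_pow_dvd_qPochhammer_X_sub {m n : ℕ} (h : n ≤ m) :
    (X : R⟦X⟧) ^ (n + 1) ∣ qPochhammer X m - qPochhammer X n := by
  induction m, h using Nat.le_induction with
  | base => simp
  | succ m hnm ih =>
    have hX : (X : R⟦X⟧) ^ (n + 1) ∣ X ^ (m + 1) := pow_dvd_pow _ (by lia)
    rw [qPochhammer_succ, mul_one_sub, sub_right_comm]
    exact dvd_sub ih (hX.mul_left _)

theorem X_pow_dvd_pentagonalSeries_sub_qPochhammer_X (n : ℕ) :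
    X ^ (n + 1) ∣ pentagonalSeries R - qPochhammer X n := by
  rw [X_pow_dvd_iff]
  intro N hN
  obtain ⟨m, hnm, hm⟩ := ((Filter.eventually_ge_atTop n).and
    (Filter.tendsto_finset_range.eventually
      (coeff_prod_one_sub_X_pow_eventually_eq R N))).exists
  have hcoeff := X_pow_dvd_iff.1 (X_pow_dvd_qPochhammer_X_sub R hnm) N hN
  rwa [map_sub, qPochhammer, hm, ← map_sub] at hcoeff

theorem isUnit_pentagonalSeries : IsUnit (pentagonalSeries R) := by
  have hX := X_pow_dvd_pentagonalSeries_sub_qPochhammer_X R 0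
  rw [zero_add, pow_one, X_dvd_iff, map_sub, sub_eq_zero] at hX
  rw [isUnit_iff_constantCoeff, hX]
  simp [qPochhammer]

theorem X_pow_dvd_gaussBinom_X_mul_pentagonalSeries_sub_one {a b : ℕ} (h : a ≤ b) :
    X ^ (a + 1) ∣ gaussBinom X (a + b) a * pentagonalSeries R - 1 := by
  have approx {m : ℕ} (hm : a ≤ m) : X ^ (a + 1) ∣ pentagonalSeries R - qPochhammer X m :=
    (pow_dvd_pow X (by lia)).trans (X_pow_dvd_pentagonalSeries_sub_qPochhammer_X R m)
  have hprod : X ^ (a + 1) ∣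
      gaussBinom X (a + b) a * (pentagonalSeries R * pentagonalSeries R) -
        gaussBinom X (a + b) a * (qPochhammer X a * qPochhammer X b) := by
    rw [← mul_sub]
    exact (dvd_mul_sub_mul (approx le_rfl) (approx h)).mul_left _
  rw [gaussBinom_mul_qPochhammer_mul_qPochhammer] at hprod
  rw [← (isUnit_pentagonalSeries R).dvd_mul_left]
  convert dvd_sub hprod (approx (show a ≤ a + b by lia)) using 1
  ring

theorem X_pow_dvd_pentagonalSeries_cube_sub_sum (n : ℕ) :
    X ^ (n + 1) ∣ pentagonalSeries R ^ 3 -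
      ∑ k ∈ range (n + 1), (-1) ^ k * (2 * (k : R⟦X⟧) + 1) * X ^ (k + 1).choose 2 := by
  have hsq : X ^ (n + 1) ∣ pentagonalSeries R ^ 2 - qPochhammer X n ^ 2 :=
    (X_pow_dvd_pentagonalSeries_sub_qPochhammer_X R n).trans (sub_dvd_pow_sub_pow _ _ _)
  have hterm : ∀ k ∈ range (n + 1), X ^ (n + 1) ∣
      (-1) ^ k * (2 * (k : R⟦X⟧) + 1) *
        (X ^ (k + 1).choose 2 *
          (gaussBinom X (2 * n + 1) (n - k) * pentagonalSeries R - 1)) := by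
    intro k hk
    obtain ⟨d, rfl⟩ := Nat.exists_eq_add_of_le (mem_range_succ_iff.1 hk)
    have hgauss :=
      X_pow_dvd_gaussBinom_X_mul_pentagonalSeries_sub_one R (show d ≤ k + d + k + 1 by lia)
    rw [show d + (k + d + k + 1) = 2 * (k + d) + 1 by ring] at hgauss
    rw [Nat.add_sub_cancel_left, add_assoc, pow_add]
    exact (mul_dvd_mul (pow_dvd_pow X (by rw [choose_two_succ]; lia)) hgauss).mul_left _
  have hsum := dvd_add (hsq.mul_left (pentagonalSeries R)) (dvd_sum hterm)
  convert hsum using 1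
  rw [← sum_gaussBinom_X_eq_qPochhammer_X_sq, mul_sub, mul_sum, sub_add, ← sum_sub_distrib,
    pow_succ']
  congr 1
  exact sum_congr rfl fun k _ ↦ by ring

theorem coeff_pentagonalSeries_cube (n : ℕ) :
    coeff n (pentagonalSeries R ^ 3) =
      ∑ k ∈ range (n + 1) with (k + 1).choose 2 = n, (-1) ^ k * (2 * (k : R) + 1) := by
  have h := X_pow_dvd_iff.1 (X_pow_dvd_pentagonalSeries_cube_sub_sum R n) n n.lt_succ_self
  have hC (k : ℕ) : ((-1) ^ k * (2 * (k : R⟦X⟧) + 1) * X ^ (k + 1).choose 2 : R⟦X⟧) =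
      C ((-1) ^ k * (2 * (k : R) + 1)) * X ^ (k + 1).choose 2 := by
    simp only [map_mul, map_pow, map_neg, map_one, map_add, map_natCast, map_ofNat]
  rw [map_sub, sub_eq_zero, map_sum] at h
  simp only [h, hC, coeff_C_mul_X_pow, sum_filter, eq_comm (a := n)]

/-- The triangular number `m (m + 1) / 2`. Indexing by all integers makes every value occur twice,
at `m` and `-1 - m`, which turns Jacobi's series into a sum over a full lattice. -/
def triangular (m : ℤ) : ℕ :=
  (m * (m + 1) / 2).toNat

theorem two_mul_natCast_triangular (m : ℤ) : 2 * (triangular m : ℤ) = m * (m + 1) := by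
  have hnonneg : 0 ≤ m * (m + 1) := by
    rcases lt_or_ge m 0 with h | h <;> nlinarith
  have heven := Int.two_mul_ediv_two_of_even (Int.even_mul_succ_self m)
  rw [triangular]
  lia

theorem triangular_natCast (k : ℕ) : triangular k = (k + 1).choose 2 := by
  have := two_mul_natCast_triangular k
  have := two_mul_choose_two (k + 1)
  push_cast at *
  lia

theorem triangular_neg_one_sub (m : ℤ) : triangular (-1 - m) = triangular m := by
  have h1 := two_mul_natCast_triangular m
  have h2 := two_mul_natCast_triangular (-1 - m)
  rw [show (-1 - m) * (-1 - m + 1) = m * (m + 1) by ring] at h2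
  lia

theorem sum_Ico_neg_eq_sum_range {M : Type*} [AddCommMonoid M] (f : ℤ → M) (n : ℕ) :
    ∑ m ∈ Ico (-n : ℤ) n, f m = ∑ k ∈ range n, (f k + f (-1 - k)) := by
  induction n with
  | zero => simp
  | succ n ih =>
    have hIco : Ico (-(n + 1 : ℕ) : ℤ) (n + 1 : ℕ) =
        insert (n : ℤ) (insert (-1 - n : ℤ) (Ico (-n : ℤ) n)) := by
      ext m
      simp only [mem_insert, mem_Ico]
      lia
    rw [hIco, sum_insert, sum_insert, ih, sum_range_succ]
    · abel
    all_goals simp only [mem_insert, mem_Ico]; lia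

theorem X_pow_dvd_two_mul_pentagonalSeries_cube_sub_sum (n : ℕ) :
    X ^ (n + 1) ∣ 2 * pentagonalSeries R ^ 3 -
      ∑ m ∈ Ico (-(n + 1 : ℕ) : ℤ) (n + 1 : ℕ),
        ((m.negOnePow * (2 * m + 1) : ℤ) : R⟦X⟧) * X ^ triangular m := by
  convert (X_pow_dvd_pentagonalSeries_cube_sub_sum R n).mul_left 2 using 1
  rw [sum_Ico_neg_eq_sum_range, mul_sub, mul_sum]
  congr 1
  refine sum_congr rfl fun k _ ↦ ?_
  rw [triangular_neg_one_sub, triangular_natCast, Int.negOnePow_sub, Int.negOnePow_neg]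
  push_cast [Int.coe_negOnePow_natCast]
  simp only [Int.negOnePow_one, Units.val_neg, Units.val_one, Int.cast_neg, Int.cast_one]
  ring

theorem abs_le_pentagonal (k : ℤ) : |k| ≤ pentagonal k := by
  have := two_mul_natCast_pentagonal k
  rw [abs_le']
  constructor <;> rcases lt_trichotomy k 0 with h | rfl | h <;> nlinarith

theorem X_pow_dvd_pentagonalSeries_sub_sum (n : ℕ) :
    X ^ (n + 1) ∣ pentagonalSeries R -
      ∑ k ∈ Icc (-n : ℤ) n, ((k.negOnePow : ℤ) : R⟦X⟧) * X ^ pentagonal k := by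
  rw [X_pow_dvd_iff]
  intro N hN
  have hC (k : ℤ) : ((k.negOnePow : ℤ) : R⟦X⟧) * X ^ pentagonal k =
      C ((k.negOnePow : ℤ) : R) * X ^ pentagonal k := by
    rw [map_intCast]
  simp only [map_sub, map_sum, hC, coeff_C_mul_X_pow, sub_eq_zero]
  by_cases hpent : N ∈ Set.range pentagonal
  · obtain ⟨k, rfl⟩ := hpent
    have hk := abs_le.1 (abs_le_pentagonal k)
    rw [coeff_pentagonalSeries_pentagonal, sum_eq_single_of_mem k, if_pos rfl]
    · rw [mem_Icc]
      lia
    · exact fun l _ hl ↦ if_neg fun h ↦ hl (pentagonal_inj.1 h).symm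
  · rw [coeff_pentagonalSeries_eq_zero R hpent]
    exact (sum_eq_zero fun k _ ↦ if_neg fun h ↦ hpent ⟨k, h.symm⟩).symm

end EulerProduct

section EulerProductFourthPower

/-- The pairs `(k, m)` of integers for which the `k`-th generalized pentagonal number and the
`m`-th triangular number add up to `n`. They index the terms contributing to the coefficient of
`Xⁿ` in `∏ (1 - Xⁱ) * ∏ (1 - Xⁱ)³`; the box only serves to make the set visibly finite. -/
noncomputable def pentTriPairs (n : ℕ) : Finset (ℤ × ℤ) :=
  {p ∈ Icc (-n : ℤ) n ×ˢ Ico (-(n + 1 : ℕ) : ℤ) (n + 1 : ℕ) | pentagonal p.1 + triangular p.2 = n}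

/-- The coefficient of the term of `∏ (1 - Xⁱ) * ∏ (1 - Xⁱ)³` indexed by `(k, m)`, by Euler's
pentagonal number theorem and (twice) Jacobi's identity. -/
def pentTriWeight (p : ℤ × ℤ) : ℤ :=
  (p.1 + p.2).negOnePow * (2 * p.2 + 1)

theorem mem_pentTriPairs {n : ℕ} {p : ℤ × ℤ} :
    p ∈ pentTriPairs n ↔ pentagonal p.1 + triangular p.2 = n := by
  refine ⟨fun h ↦ (mem_filter.1 h).2, fun h ↦ mem_filter.2 ⟨?_, h⟩⟩
  have hk := abs_le.1 (abs_le_pentagonal p.1)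
  have hm := two_mul_natCast_triangular p.2
  have hm_upper : p.2 ≤ triangular p.2 := by nlinarith [Int.le_self_sq p.2]
  have hm_lower : -1 - p.2 ≤ triangular p.2 := by nlinarith [Int.le_self_sq (-1 - p.2)]
  simp only [mem_product, mem_Icc, mem_Ico]
  lia

theorem mem_pentTriPairs_iff_quadraticForm {n : ℕ} {p : ℤ × ℤ} :
    p ∈ pentTriPairs n ↔ (6 * p.1 - 1) ^ 2 + 3 * (2 * p.2 + 1) ^ 2 = 24 * n + 4 := by
  have hk := two_mul_natCast_pentagonal p.1
  have hm := two_mul_natCast_triangular p.2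
  rw [mem_pentTriPairs, ← Nat.cast_inj (R := ℤ), Nat.cast_add]
  constructor <;> intro h <;> linarith

theorem two_mul_coeff_pentagonalSeries_pow_four (R : Type*) [CommRing R] (n : ℕ) :
    2 * coeff n (pentagonalSeries R ^ 4) = ((∑ p ∈ pentTriPairs n, pentTriWeight p : ℤ) : R) := by
  have hdvd := dvd_mul_sub_mul (X_pow_dvd_pentagonalSeries_sub_sum R n)
    (X_pow_dvd_two_mul_pentagonalSeries_cube_sub_sum R n)
  have hterm (p : ℤ × ℤ) :
      ((p.1.negOnePow : ℤ) : R⟦X⟧) * X ^ pentagonal p.1 *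
        (((p.2.negOnePow * (2 * p.2 + 1) : ℤ) : R⟦X⟧) * X ^ triangular p.2) =
      C ((pentTriWeight p : ℤ) : R) * X ^ (pentagonal p.1 + triangular p.2) := by
    rw [map_intCast, pentTriWeight, Int.negOnePow_add]
    push_cast
    ring
  have hcoeff := X_pow_dvd_iff.1 hdvd n n.lt_succ_self
  simp only [sum_mul_sum, ← sum_product', hterm] at hcoeff
  rw [show pentagonalSeries R * (2 * pentagonalSeries R ^ 3) = C 2 * pentagonalSeries R ^ 4 by
    rw [map_ofNat]; ring, map_sub, coeff_C_mul, map_sum, sub_eq_zero] at hcoeff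
  simp only [hcoeff, coeff_C_mul_X_pow, pentTriPairs, Int.cast_sum, Int.cast_ite,
    Int.cast_zero, sum_filter, eq_comm (a := n)]

/-- The involution `y ↦ -y` on `(k, m)`, in the coordinates `x = 6k - 1`, `y = 2m + 1` in which
the pairs are the points of the quadric `x² + 3y² = 24n + 4`. -/
def pentTriReflect (p : ℤ × ℤ) : ℤ × ℤ :=
  (p.1, -1 - p.2)

/-- In the coordinates `x = 6k - 1`, `y = 2m + 1`, the map sending `x + y√-3` to
`(-2 + √-3) (x - y√-3)`; it multiplies the norm `x² + 3y²` by `7`. -/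
def pentTriLift (p : ℤ × ℤ) : ℤ × ℤ :=
  (p.2 - 2 * p.1 + 1, 3 * p.1 + 2 * p.2)

theorem pentTriReflect_mem {n : ℕ} {p : ℤ × ℤ} (hp : p ∈ pentTriPairs n) :
    pentTriReflect p ∈ pentTriPairs n := by
  rw [mem_pentTriPairs] at hp ⊢
  rwa [pentTriReflect, triangular_neg_one_sub]

theorem pentTriReflect_pentTriReflect (p : ℤ × ℤ) : pentTriReflect (pentTriReflect p) = p := by
  simp [pentTriReflect]

theorem pentTriLift_mem_iff {n : ℕ} {p : ℤ × ℤ} :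
    pentTriLift p ∈ pentTriPairs (7 * n + 1) ↔ p ∈ pentTriPairs n := by
  rw [mem_pentTriPairs_iff_quadraticForm, mem_pentTriPairs_iff_quadraticForm, pentTriLift]
  push_cast
  constructor <;> intro h <;> linarith

theorem negOnePow_add_neg_one_sub (k m : ℤ) :
    (k + (-1 - m)).negOnePow = -(k + m).negOnePow := by
  simp only [Int.negOnePow_add, Int.negOnePow_sub, Int.negOnePow_neg, Int.negOnePow_one,
    neg_one_mul, mul_neg]

theorem pentTriWeight_pentTriReflect (p : ℤ × ℤ) :
    pentTriWeight (pentTriReflect p) = pentTriWeight p := by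
  rw [pentTriWeight, pentTriReflect, negOnePow_add_neg_one_sub, Units.val_neg, pentTriWeight]
  ring

theorem pentTriWeight_pentTriLift (p : ℤ × ℤ) :
    pentTriWeight (pentTriLift p) =
      -((p.1 + p.2).negOnePow * ((6 * p.1 - 1) + 2 * (2 * p.2 + 1))) := by
  have hsign : (p.2 - 2 * p.1 + 1 + (3 * p.1 + 2 * p.2)).negOnePow = -(p.1 + p.2).negOnePow := by
    rw [show p.2 - 2 * p.1 + 1 + (3 * p.1 + 2 * p.2) = p.1 + p.2 + 2 * p.2 + 1 by ring,
      Int.negOnePow_succ, Int.negOnePow_add, Int.negOnePow_two_mul, mul_one]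
  rw [pentTriWeight, pentTriLift, hsign, Units.val_neg]
  ring

theorem pentTriWeight_lift_add_lift_reflect (p : ℤ × ℤ) :
    pentTriWeight (pentTriLift p) + pentTriWeight (pentTriLift (pentTriReflect p)) =
      -4 * pentTriWeight p := by
  rw [pentTriWeight_pentTriLift, pentTriWeight_pentTriLift, pentTriReflect,
    negOnePow_add_neg_one_sub, Units.val_neg, pentTriWeight]
  ring

theorem sum_pentTriPairs_comp_pentTriReflect {M : Type*} [AddCommMonoid M] (f : ℤ × ℤ → M)
    (n : ℕ) : ∑ p ∈ pentTriPairs n, f (pentTriReflect p) = ∑ p ∈ pentTriPairs n, f p :=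
  sum_nbij' pentTriReflect pentTriReflect (fun _ ↦ pentTriReflect_mem)
    (fun _ ↦ pentTriReflect_mem) (fun p _ ↦ pentTriReflect_pentTriReflect p)
    (fun p _ ↦ pentTriReflect_pentTriReflect p) fun _ _ ↦ rfl

theorem sum_pentTriWeight_filter_dvd (n : ℕ) :
    ∑ p ∈ pentTriPairs (7 * n + 1) with 7 ∣ p.2 - 2 * p.1 + 2, pentTriWeight p =
      ∑ p ∈ pentTriPairs n, pentTriWeight (pentTriLift p) := by
  symm
  refine sum_nbij pentTriLift (fun p hp ↦ ?_) (fun p _ q _ hpq ↦ ?_) (fun q hq ↦ ?_)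
    fun _ _ ↦ rfl
  · rw [mem_filter]
    exact ⟨pentTriLift_mem_iff.2 hp, p.1, by simp only [pentTriLift]; ring⟩
  · simp only [pentTriLift, Prod.mk.injEq] at hpq
    ext <;> lia
  · obtain ⟨hmem, k, hk⟩ := mem_filter.1 hq
    have hlift : pentTriLift (k, q.1 - 1 + 2 * k) = q := by
      ext <;> simp only [pentTriLift] <;> lia
    exact ⟨_, mem_coe.2 (pentTriLift_mem_iff.1 (hlift.symm ▸ hmem)), hlift⟩

theorem dvd_or_dvd_of_mem_pentTriPairs {n : ℕ} {p : ℤ × ℤ} (hp : p ∈ pentTriPairs (7 * n + 1)) :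
    7 ∣ p.2 - 2 * p.1 + 2 ∨ 7 ∣ (pentTriReflect p).2 - 2 * (pentTriReflect p).1 + 2 := by
  rw [mem_pentTriPairs_iff_quadraticForm] at hp
  push_cast at hp
  have h7 : Prime (7 : ℤ) := by norm_num
  have hdvd : (7 : ℤ) ∣ (p.2 - 2 * p.1 + 2) * (-1 - p.2 - 2 * p.1 + 2) := by
    lia
  exact h7.dvd_or_dvd hdvd

theorem dvd_pentTriWeight_of_dvd_of_dvd {p : ℤ × ℤ} (h : 7 ∣ p.2 - 2 * p.1 + 2)
    (h' : 7 ∣ (pentTriReflect p).2 - 2 * (pentTriReflect p).1 + 2) : 7 ∣ pentTriWeight p := by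
  rw [pentTriReflect] at h'
  exact Dvd.dvd.mul_left (by lia) _

theorem dvd_sum_pentTriWeight_add (n : ℕ) :
    7 ∣ ∑ p ∈ pentTriPairs (7 * n + 1), pentTriWeight p +
      4 * ∑ p ∈ pentTriPairs n, pentTriWeight p := by
  set onLift : ℤ × ℤ → ℤ := fun p ↦ if 7 ∣ p.2 - 2 * p.1 + 2 then pentTriWeight p else 0 with h_on
  have hcover : 7 ∣ ∑ p ∈ pentTriPairs (7 * n + 1),
      (pentTriWeight p - (onLift p + onLift (pentTriReflect p))) := by
    refine dvd_sum fun p hp ↦ ?_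
    have hor := dvd_or_dvd_of_mem_pentTriPairs hp
    have hand := dvd_pentTriWeight_of_dvd_of_dvd (p := p)
    simp only [h_on, pentTriWeight_pentTriReflect]
    split_ifs <;> grind
  have hlift : ∑ p ∈ pentTriPairs (7 * n + 1), onLift p =
      ∑ p ∈ pentTriPairs n, pentTriWeight (pentTriLift p) := by
    rw [← sum_pentTriWeight_filter_dvd, sum_filter]
  have hfour : ∑ p ∈ pentTriPairs n, pentTriWeight (pentTriLift p) +
      ∑ p ∈ pentTriPairs n, pentTriWeight (pentTriLift p) =
        -4 * ∑ p ∈ pentTriPairs n, pentTriWeight p := by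
    nth_rw 2 [← sum_pentTriPairs_comp_pentTriReflect]
    rw [← sum_add_distrib, mul_sum]
    exact sum_congr rfl fun p _ ↦
      pentTriWeight_lift_add_lift_reflect p
  rw [sum_sub_distrib, sum_add_distrib, sum_pentTriPairs_comp_pentTriReflect, hlift, hfour]
    at hcover
  rwa [neg_mul, sub_neg_eq_add] at hcover

end EulerProductFourthPower

section ModSeven

theorem coeff_pentagonalSeries_zmod_seven_pow_four (n : ℕ) :
    coeff (7 * n + 1) (pentagonalSeries (ZMod 7) ^ 4) =
      3 * coeff n (pentagonalSeries (ZMod 7) ^ 4) := by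
  have hdvd := (ZMod.intCast_zmod_eq_zero_iff_dvd _ 7).2 (dvd_sum_pentTriWeight_add n)
  rw [Int.cast_add, Int.cast_mul, ← two_mul_coeff_pentagonalSeries_pow_four,
    ← two_mul_coeff_pentagonalSeries_pow_four] at hdvd
  have h7 : (7 : ZMod 7) = 0 := rfl
  push_cast at hdvd
  linear_combination 4 * hdvd -
    (coeff (7 * n + 1) (pentagonalSeries (ZMod 7) ^ 4) +
      5 * coeff n (pentagonalSeries (ZMod 7) ^ 4)) * h7

theorem coeff_pentagonalSeries_zmod_seven_cube_eq_zero {n j : ℕ}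
    (hj : j = 2 ∨ j = 4 ∨ j = 5 ∨ j = 6) :
    coeff (7 * n + j) (pentagonalSeries (ZMod 7) ^ 3) = 0 := by
  rw [coeff_pentagonalSeries_cube]
  refine sum_eq_zero fun k hk ↦ ?_
  have hsquare : (2 * (k : ZMod 7) + 1) ^ 2 = 8 * (j : ZMod 7) + 1 := by
    have hchoose := congr_arg (Int.cast : ℤ → ZMod 7) (two_mul_choose_two (k + 1))
    rw [(mem_filter.1 hk).2] at hchoose
    have h7 : (7 : ZMod 7) = 0 := rfl
    push_cast at hchoose
    linear_combination -4 * hchoose + 8 * n * h7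
  have hresidue : ∀ y : ZMod 7, (∃ j ∈ ({2, 4, 5, 6} : Finset (ZMod 7)), y ^ 2 = 8 * j + 1) →
      y = 0 := by decide
  rw [hresidue _ ⟨j, by rcases hj with rfl | rfl | rfl | rfl <;> decide, hsquare⟩, mul_zero]

end ModSeven

section Multisection

variable {R : Type*} [CommRing R]

/-- The power series `∑ a_{pn+j} Xⁿ` extracted from `∑ aₙ Xⁿ`, with exponents rescaled. It picks out
the coefficients on one residue class modulo `p`. -/
noncomputable def multisection (p j : ℕ) (f : R⟦X⟧) : R⟦X⟧ :=
  mk fun n ↦ coeff (p * n + j) f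

theorem coeff_multisection (p j n : ℕ) (f : R⟦X⟧) :
    coeff n (multisection p j f) = coeff (p * n + j) f :=
  coeff_mk _ _

theorem multisection_C_mul (p j : ℕ) (a : R) (f : R⟦X⟧) :
    multisection p j (C a * f) = C a * multisection p j f := by
  ext n
  simp only [coeff_multisection, coeff_C_mul]

theorem multisection_mul_expand {p j : ℕ} (hp : p ≠ 0) (hj : j < p) (f g : R⟦X⟧) :
    multisection p j (f * expand p hp g) = multisection p j f * g := by
  ext n
  rw [coeff_multisection, coeff_mul, coeff_mul]
  simp only [coeff_multisection, coeff_expand]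
  refine (sum_of_injOn (fun a : ℕ × ℕ ↦ (p * a.1 + j, p * a.2)) ?_ ?_ ?_ ?_).symm
  · rintro ⟨a, b⟩ - ⟨a', b'⟩ - h
    simpa [hp] using h
  · rintro ⟨a, b⟩ h
    simp only [mem_coe, HasAntidiagonal.mem_antidiagonal] at h ⊢
    rw [← h]
    ring
  · rintro ⟨a, b⟩ h hnot
    rw [if_neg, mul_zero]
    rintro ⟨c, rfl⟩
    simp only [HasAntidiagonal.mem_antidiagonal] at h
    have hcn : c ≤ n := by nlinarith
    obtain ⟨d, rfl⟩ := Nat.exists_eq_add_of_le' hcn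
    refine hnot ⟨(d, c), by simp, ?_⟩
    simp only [Prod.mk.injEq, and_true]
    linarith
  · rintro ⟨a, b⟩ -
    simp [Nat.pos_of_ne_zero hp]

theorem multisection_mul_pow {p : ℕ} [Fact p.Prime] {j : ℕ} (hj : j < p) (f g : (ZMod p)⟦X⟧) :
    multisection p j (f * g ^ p) = multisection p j f * g := by
  have hp := (Fact.out : p.Prime).ne_zero
  have frobenius : expand p hp g = g ^ p := by
    have h := MvPowerSeries.map_frobenius_expand (σ := Unit) (R := ZMod p) p hp (f := g)
    rwa [ZMod.frobenius_zmod, MvPowerSeries.map_id] at h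
  rw [← frobenius, multisection_mul_expand hp hj]

end Multisection

section WeightedCount

variable (R : Type*) [CommRing R] {ι : Type*} {w : ι → ℕ} {n : ℕ} {s : Finset ι}

theorem support_subset_of_sum_mul_eq (hs : ∀ i, w i ≤ n → i ∈ s) {f : ι →₀ ℕ}
    (hf : (f.sum fun i m ↦ w i * m) = n) : f.support ⊆ s := by
  intro i hi
  have hle : w i * f i ≤ n := hf ▸ single_le_sum (f := fun i ↦ w i * f i) (by simp) hi
  exact hs i ((Nat.le_mul_of_pos_right _ (Nat.pos_of_ne_zero (Finsupp.mem_support_iff.1 hi))).trans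
    hle)

theorem bijOn_smul_filter_finsuppAntidiag [DecidableEq ι] (hw : ∀ i, w i ≠ 0)
    (hs : ∀ i, w i ≤ n → i ∈ s) :
    Set.BijOn (w • · : (ι →₀ ℕ) → ι →₀ ℕ) {f | (f.sum fun i m ↦ w i * m) = n}
      ↑({l ∈ finsuppAntidiag s n | ∀ i ∈ s, w i ∣ l i} : Finset (ι →₀ ℕ)) := by
  refine ⟨fun f hf ↦ ?_, fun f _ g _ hfg ↦ ?_, fun l hl ↦ ?_⟩
  · have hsupp := support_subset_of_sum_mul_eq hs hf
    rw [mem_coe, mem_filter, mem_finsuppAntidiag]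
    refine ⟨⟨?_, fun i hi ↦ hsupp ?_⟩, fun i _ ↦ Dvd.intro _ rfl⟩
    · rw [← hf, Finsupp.sum_of_support_subset f hsupp _ (by simp)]
      rfl
    · rw [Finsupp.mem_support_iff] at hi ⊢
      exact right_ne_zero_of_mul hi
  · ext i
    exact Nat.eq_of_mul_eq_mul_left (Nat.pos_of_ne_zero (hw i)) (DFunLike.congr_fun hfg i)
  · obtain ⟨hl, hdvd⟩ := mem_filter.1 (mem_coe.1 hl)
    obtain ⟨hsum, hsupp⟩ := mem_finsuppAntidiag.1 hl
    let f : ι →₀ ℕ := Finsupp.onFinset s (fun i ↦ l i / w i) fun i hi ↦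
      hsupp (Finsupp.mem_support_iff.2 fun h ↦ hi (by simp [h]))
    refine ⟨f, ?_, ?_⟩
    · rw [Set.mem_ofPred_eq, Finsupp.onFinset_sum _ (by simp), ← hsum]
      exact sum_congr rfl fun i hi ↦ Nat.mul_div_cancel' (hdvd i hi)
    · ext i
      by_cases hi : i ∈ s
      · exact Nat.mul_div_cancel' (hdvd i hi)
      · have hli : l i = 0 := Finsupp.notMem_support_iff.1 fun h ↦ hi (hsupp h)
        simp [f, hli]

theorem natCast_card_sum_mul_eq (hw : ∀ i, w i ≠ 0) (hs : ∀ i, w i ≤ n → i ∈ s) :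
    (Nat.card {f : ι →₀ ℕ // (f.sum fun i m ↦ w i * m) = n} : R) =
      coeff n (∏ i ∈ s, expand (w i) (hw i) (mk 1 : R⟦X⟧)) := by
  classical
  have hcard := Nat.card_congr ((bijOn_smul_filter_finsuppAntidiag hw hs).equiv)
  rw [coeff_prod]
  simp only [coeff_expand, coeff_mk, Pi.one_apply, prod_boole, sum_boole]
  rw [← Set.ncard_coe_finset]
  exact congr_arg Nat.cast hcard

end WeightedCount

section GeneratingFunction

variable (R : Type*) [CommRing R]

theorem natCast_colouredPartitions {r n N : ℕ} (h : n ≤ N) :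
    (colouredPartitions r n : R) =
      coeff n ((∏ i ∈ range N, expand (i + 1) i.succ_ne_zero (mk 1 : R⟦X⟧)) ^ r) := by
  have hparts (p : ℕ+ × Fin r) (hp : (p.1 : ℕ) ≤ n) :
      p ∈ (range N).image Nat.succPNat ×ˢ (univ : Finset (Fin r)) := by
    have hpred := PNat.natPred_add_one p.1
    simp only [mem_product, mem_image, mem_range, mem_univ, and_true]
    exact ⟨p.1.natPred, by lia, PNat.succPNat_natPred _⟩
  rw [colouredPartitions, natCast_card_sum_mul_eq R (fun p ↦ p.1.ne_zero) hparts,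
    prod_product_right]
  congr 1
  calc
    _ = ∏ _ : Fin r, ∏ i ∈ range N, expand (i + 1) i.succ_ne_zero (mk 1 : R⟦X⟧) :=
      prod_congr rfl fun _ _ ↦ prod_image Nat.succPNat_injective.injOn
    _ = _ := by rw [prod_const, card_univ, Fintype.card_fin]

theorem expand_mk_one_mul_one_sub_X_pow {d : ℕ} (hd : d ≠ 0) :
    expand d hd (mk 1 : R⟦X⟧) * (1 - X ^ d) = 1 := by
  rw [← expand_X d hd, ← map_one (expand d hd), ← map_sub, ← map_mul, mk_one_mul_one_sub_eq_one]

theorem mk_colouredPartitions_mul_pentagonalSeries_pow (r : ℕ) :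
    (mk fun n ↦ (colouredPartitions r n : R) : R⟦X⟧) * pentagonalSeries R ^ r = 1 := by
  ext n
  set P := ∏ i ∈ range n, expand (i + 1) i.succ_ne_zero (mk 1 : R⟦X⟧) with hP
  have hinv : P ^ r * qPochhammer X n ^ r = 1 := by
    rw [← mul_pow, hP, qPochhammer, ← prod_mul_distrib]
    simp only [expand_mk_one_mul_one_sub_X_pow, prod_const_one, one_pow]
  have hcount : X ^ (n + 1) ∣ (mk fun n ↦ (colouredPartitions r n : R) : R⟦X⟧) - P ^ r := by
    rw [X_pow_dvd_iff]
    intro m hm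
    rw [map_sub, coeff_mk, natCast_colouredPartitions R (Nat.le_of_lt_succ hm), sub_self]
  have hpow : X ^ (n + 1) ∣ pentagonalSeries R ^ r - qPochhammer X n ^ r :=
    (X_pow_dvd_pentagonalSeries_sub_qPochhammer_X R n).trans (sub_dvd_pow_sub_pow _ _ _)
  have hdvd := dvd_mul_sub_mul hcount hpow
  rw [hinv] at hdvd
  exact sub_eq_zero.1 ((map_sub _ _ _).symm.trans (X_pow_dvd_iff.1 hdvd n n.lt_succ_self))

end GeneratingFunction

theorem multisection_pentagonalSeries_zmod_seven_pow_four :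
    multisection 7 1 (pentagonalSeries (ZMod 7) ^ 4) = C 3 * pentagonalSeries (ZMod 7) ^ 4 := by
  ext n
  rw [coeff_multisection, coeff_pentagonalSeries_zmod_seven_pow_four, coeff_C_mul]

theorem multisection_pentagonalSeries_zmod_seven_cube {j : ℕ}
    (hj : j = 2 ∨ j = 4 ∨ j = 5 ∨ j = 6) :
    multisection 7 j (pentagonalSeries (ZMod 7) ^ 3) = 0 := by
  ext n
  rw [coeff_multisection, coeff_pentagonalSeries_zmod_seven_cube_eq_zero hj, map_zero]

theorem colouredPartitions_cong_mod7_49k3 (k n j : ℕ) (hj : j = 2 ∨ j = 4 ∨ j = 5 ∨ j = 6) :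
    7 ∣ colouredPartitions (49 * k + 3) (49 * n + 7 * j + 1) := by
  have : Fact (Nat.Prime 7) := ⟨by norm_num⟩
  set F := pentagonalSeries (ZMod 7)
  set P : (ZMod 7)⟦X⟧ := mk fun n ↦ (colouredPartitions (49 * k + 3) n : ZMod 7) with hP
  have hF : IsUnit F := isUnit_pentagonalSeries _
  have hP_mul : P * (F ^ (7 * k + 1)) ^ 7 = F ^ 4 := by
    linear_combination F ^ 4 * mk_colouredPartitions_mul_pentagonalSeries_pow (ZMod 7) (49 * k + 3)
  have hfirst : multisection 7 1 P * (F ^ k) ^ 7 = C 3 * F ^ 3 := by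
    refine hF.mul_right_cancel ?_
    have h := multisection_mul_pow (show 1 < 7 by lia) P (F ^ (7 * k + 1))
    rw [hP_mul, multisection_pentagonalSeries_zmod_seven_pow_four] at h
    linear_combination -h
  have hsecond : multisection 7 j (multisection 7 1 P) = 0 := by
    refine (hF.pow k).mul_left_eq_zero.1 ?_
    rw [← multisection_mul_pow (by lia), hfirst, multisection_C_mul,
      multisection_pentagonalSeries_zmod_seven_cube hj, mul_zero]
  have hcoeff := congr_arg (coeff n) hsecond
  rwa [coeff_multisection, coeff_multisection, hP, coeff_mk, map_zero, ZMod.natCast_eq_zero_iff,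
    show 7 * (7 * n + j) + 1 = 49 * n + 7 * j + 1 by ring] at hcoeff
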